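/- Let K be a shape-regular element with inscribed ball B(K) of radius ρ_K ≃ h_K centered at x_K, let β̄ ∈ ℝ^d be a nonzero constant vector, and let Γ = {x ∈ B(K) : β̄·(x − x_K) = 0} be the hyperplane section through x_K orthogonal to β̄. Then for all polynomials u of degree ≤ p: h_K^{−1}‖u‖²_{L²(K)} ≤ C (h_K ‖β̄_r·∇u‖²_{L²(K)} + ‖u‖²_{L²(Γ)}), where β̄_r = β̄/|β̄| and C depends only on d, p and the shape-regularity constant. -/

import Mathlib

open MeasureTheory

/-- A linear family of square-integrable functions, as a linear map into `L²`. -/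
noncomputable def toLpLinearMap {V α : Type*} [AddCommGroup V] [Module ℝ V] [MeasurableSpace α]
    {μ : Measure α} (e : V →ₗ[ℝ] α → ℝ) (he : ∀ v, MemLp (e v) 2 μ) : V →ₗ[ℝ] Lp ℝ 2 μ where
  toFun v := (he v).toLp (e v)
  map_add' v w := by
    rw [← MemLp.toLp_add]
    exact MemLp.toLp_congr _ _ (by simp)
  map_smul' c v := by
    rw [RingHom.id_apply, ← MemLp.toLp_const_smul]
    exact MemLp.toLp_congr _ _ (by simp)

lemma norm_toLpLinearMap_sq {V α : Type*} [AddCommGroup V] [Module ℝ V] [MeasurableSpace α]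
    {μ : Measure α} (e : V →ₗ[ℝ] α → ℝ) (he : ∀ v, MemLp (e v) 2 μ) (v : V) :
    ‖toLpLinearMap e he v‖ ^ 2 = ∫ x, (e v x) ^ 2 ∂μ := by
  rw [← real_inner_self_eq_norm_sq, L2.inner_def]
  refine integral_congr_ae ?_
  filter_upwards [(he v).coeFn_toLp] with x hx
  change inner ℝ ((he v).toLp (e v) x) ((he v).toLp (e v) x) = _
  rw [hx, real_inner_self_eq_norm_sq, Real.norm_eq_abs, sq_abs]

/-- On a finite-dimensional space of functions, a definite pair of `L²` seminorms dominates every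
other `L²` seminorm. -/
lemma exists_integral_sq_le {V α β γ : Type*} [AddCommGroup V] [Module ℝ V] [Module.Finite ℝ V]
    [MeasurableSpace α] [MeasurableSpace β] [MeasurableSpace γ]
    {μ : Measure α} {ν : Measure β} {τ : Measure γ}
    (e : V →ₗ[ℝ] α → ℝ) (f : V →ₗ[ℝ] β → ℝ) (g : V →ₗ[ℝ] γ → ℝ)
    (he : ∀ v, MemLp (e v) 2 μ) (hf : ∀ v, MemLp (f v) 2 ν) (hg : ∀ v, MemLp (g v) 2 τ)
    (hinj : ∀ v, f v =ᵐ[ν] 0 → g v =ᵐ[τ] 0 → v = 0) :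
    ∃ C : ℝ, 0 < C ∧ ∀ v,
      ∫ x, (e v x) ^ 2 ∂μ ≤ C * (∫ x, (f v x) ^ 2 ∂ν + ∫ x, (g v x) ^ 2 ∂τ) := by
  let L := (toLpLinearMap f hf).prod (toLpLinearMap g hg)
  have hL : Function.Injective L := by
    rw [injective_iff_map_eq_zero]
    intro v hv
    have h1 : (hf v).toLp (f v) = 0 := congrArg Prod.fst hv
    have h2 : (hg v).toLp (g v) = 0 := congrArg Prod.snd hv
    refine hinj v ((hf v).coeFn_toLp.symm.trans ?_) ((hg v).coeFn_toLp.symm.trans ?_)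
    · rw [h1]
      exact Lp.coeFn_zero ..
    · rw [h2]
      exact Lp.coeFn_zero ..
  let Φ : LinearMap.range L →ₗ[ℝ] Lp ℝ 2 μ :=
    toLpLinearMap e he ∘ₗ (LinearEquiv.ofInjective L hL).symm.toLinearMap
  refine ⟨‖Φ.toContinuousLinearMap‖ ^ 2 + 1, by positivity, fun v ↦ ?_⟩
  have h := Φ.toContinuousLinearMap.le_opNorm (LinearEquiv.ofInjective L hL v)
  have h1 : Φ.toContinuousLinearMap (LinearEquiv.ofInjective L hL v) = toLpLinearMap e he v := by
    simp [Φ]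
  have h2 : ‖LinearEquiv.ofInjective L hL v‖ ^ 2 ≤
      ‖toLpLinearMap f hf v‖ ^ 2 + ‖toLpLinearMap g hg v‖ ^ 2 := by
    have h3 : ‖LinearEquiv.ofInjective L hL v‖ =
        max ‖toLpLinearMap f hf v‖ ‖toLpLinearMap g hg v‖ := rfl
    rw [h3]
    rcases max_cases ‖toLpLinearMap f hf v‖ ‖toLpLinearMap g hg v‖ with h | h <;> rw [h.1] <;>
      nlinarith [sq_nonneg ‖toLpLinearMap f hf v‖, sq_nonneg ‖toLpLinearMap g hg v‖]
  rw [h1] at h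
  rw [← norm_toLpLinearMap_sq e he, ← norm_toLpLinearMap_sq f hf, ← norm_toLpLinearMap_sq g hg]
  calc _ ≤ (‖Φ.toContinuousLinearMap‖ * ‖LinearEquiv.ofInjective L hL v‖) ^ 2 := by gcongr
    _ = ‖Φ.toContinuousLinearMap‖ ^ 2 * ‖LinearEquiv.ofInjective L hL v‖ ^ 2 := mul_pow ..
    _ ≤ _ := by
      gcongr
      linarith

lemma Continuous.memLp_ball {E : Type*} [NormedAddCommGroup E] [NormedSpace ℝ E] [ProperSpace E]
    [MeasurableSpace E] [BorelSpace E] {μ : Measure E} [IsFiniteMeasureOnCompacts μ]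
    {f : E → ℝ} (hf : Continuous f) (p : ENNReal) (x : E) (r : ℝ) :
    MemLp f p (μ.restrict (Metric.ball x r)) := by
  have : IsFiniteMeasure (μ.restrict (Metric.ball x r)) :=
    ⟨by simpa using Metric.isBounded_ball.measure_lt_top⟩
  obtain ⟨C, hC⟩ := (isCompact_closedBall x r).exists_bound_of_continuousOn hf.continuousOn
  refine MemLp.of_bound hf.aestronglyMeasurable C ?_
  filter_upwards [ae_restrict_mem measurableSet_ball] with y hy
  exact hC y (Metric.ball_subset_closedBall hy)

/-- Substituting polynomials of total degree at most one does not raise the total degree. -/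
lemma MvPolynomial.totalDegree_bind₁_le_of_le_one {R σ τ : Type*} [CommSemiring R]
    (q : MvPolynomial σ R) (f : σ → MvPolynomial τ R) (hf : ∀ i, (f i).totalDegree ≤ 1) :
    (bind₁ f q).totalDegree ≤ q.totalDegree := by
  rw [← aeval_eq_bind₁, aeval_def, eval₂_eq]
  refine totalDegree_finsetSum_le fun m hm ↦ (totalDegree_mul _ _).trans ?_
  rw [algebraMap_eq, totalDegree_C, zero_add]
  refine (totalDegree_finsetProd _ _).trans (le_trans ?_ (le_totalDegree hm))
  refine Finset.sum_le_sum fun i _ ↦ (totalDegree_pow _ _).trans ?_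
  simpa using Nat.mul_le_mul_left (m i) (hf i)

/-- The pullback of a polynomial by an affine map is a polynomial of no larger degree. -/
lemma MvPolynomial.exists_eval_affine {R σ τ : Type*} [CommSemiring R] [Fintype τ]
    (q : MvPolynomial σ R) (a : σ → R) (M : σ → τ → R) :
    ∃ r : MvPolynomial τ R, r.totalDegree ≤ q.totalDegree ∧
      ∀ x : τ → R, eval x r = eval (fun i ↦ a i + ∑ j, M i j * x j) q := by
  refine ⟨bind₁ (fun i ↦ C (a i) + ∑ j, C (M i j) * X j) q,
    totalDegree_bind₁_le_of_le_one q _ fun i ↦ ?_, fun x ↦ ?_⟩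
  · refine (totalDegree_add _ _).trans (max_le (by simp) (totalDegree_finsetSum_le fun j _ ↦ ?_))
    rw [← smul_eq_C_mul]
    exact (totalDegree_smul_le _ _).trans
      ((totalDegree_monomial_le (R := R) (Finsupp.single j 1) 1).trans (by simp))
  · refine (eval₂Hom_bind₁ ..).trans ?_
    change eval _ q = eval _ q
    congr 2
    funext i
    change eval x _ = _
    simp

/-- The function on Euclidean space given by a polynomial. -/
noncomputable def polyFun (n : ℕ) : MvPolynomial (Fin n) ℝ →ₗ[ℝ] EuclideanSpace ℝ (Fin n) → ℝ where
  toFun q x := MvPolynomial.eval (fun i ↦ x i) q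
  map_add' q r := by ext; simp
  map_smul' c q := by ext; simp

lemma analyticOnNhd_polyFun {n : ℕ} (q : MvPolynomial (Fin n) ℝ)
    (s : Set (EuclideanSpace ℝ (Fin n))) : AnalyticOnNhd ℝ (polyFun n q) s :=
  fun x _ ↦ AnalyticAt.aeval_mvPolynomial
    (fun i ↦ (EuclideanSpace.proj (𝕜 := ℝ) i).analyticAt x) q

lemma polyFun_injective (n : ℕ) : Function.Injective (polyFun n) := by
  intro q r h
  refine MvPolynomial.funext fun x ↦ ?_
  exact congrFun h (WithLp.toLp 2 x)

lemma setIntegral_ball_comp_affine {E : Type*} [NormedAddCommGroup E] [InnerProductSpace ℝ E]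
    [FiniteDimensional ℝ E] [MeasurableSpace E] [BorelSpace E] (T : E ≃ₗᵢ[ℝ] E) (a : E)
    {ρ : ℝ} (hρ : 0 < ρ) (r : ℝ) (f : E → ℝ) :
    ∫ x in Metric.ball a (ρ * r), f x =
      ρ ^ Module.finrank ℝ E * ∫ x in Metric.ball 0 r, f (a + ρ • T x) := by
  have h1 := Measure.setIntegral_comp_smul_of_pos (volume : Measure E)
    (fun x ↦ f (a + T x)) (Metric.ball 0 r) hρ
  simp only [map_smul] at h1
  rw [h1, smul_eq_mul, mul_inv_cancel_left₀ (by positivity), smul_ball hρ.ne', smul_zero,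
    Real.norm_of_nonneg hρ.le]
  have hmp : MeasurePreserving (fun x ↦ a + T x) (volume : Measure E) volume :=
    (measurePreserving_add_left volume a).comp T.measurePreserving
  have hemb : MeasurableEmbedding (fun x ↦ a + T x) :=
    (MeasurableEquiv.addLeft a).measurableEmbedding.comp
      T.toHomeomorph.measurableEmbedding
  rw [← hmp.setIntegral_preimage_emb hemb]
  congr 2
  ext x
  simp [dist_eq_norm]

/-- The embedding of the hyperplane of vectors with vanishing first coordinate. -/
noncomputable def hyperplaneEmbedding (n : ℕ) :
    EuclideanSpace ℝ (Fin n) →L[ℝ] EuclideanSpace ℝ (Fin (n + 1)) :=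
  LinearMap.toContinuousLinearMap
    { toFun := fun y ↦ WithLp.toLp 2 (Fin.cons 0 y)
      map_add' := fun x y ↦ by ext i; refine Fin.cases ?_ (fun j ↦ ?_) i <;> simp
      map_smul' := fun c y ↦ by ext i; refine Fin.cases ?_ (fun j ↦ ?_) i <;> simp }

@[simp] lemma hyperplaneEmbedding_zero (n : ℕ) (y : EuclideanSpace ℝ (Fin n)) :
    hyperplaneEmbedding n y 0 = 0 := rfl

@[simp] lemma hyperplaneEmbedding_succ (n : ℕ) (y : EuclideanSpace ℝ (Fin n)) (j : Fin n) :
    hyperplaneEmbedding n y j.succ = y j := rfl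

lemma hyperplaneEmbedding_tail_add_smul (n : ℕ) (x : EuclideanSpace ℝ (Fin (n + 1))) :
    hyperplaneEmbedding n (WithLp.toLp 2 (Fin.tail x)) + x 0 • EuclideanSpace.single 0 1 = x := by
  ext i
  refine Fin.cases ?_ (fun j ↦ ?_) i <;> simp [Fin.tail]

lemma AnalyticOnNhd.eq_zero_of_ae_eq_zero_on_ball {E : Type*} [NormedAddCommGroup E]
    [NormedSpace ℝ E] [MeasurableSpace E] {μ : Measure E} [μ.IsOpenPosMeasure]
    {f : E → ℝ} (hf : AnalyticOnNhd ℝ f Set.univ) {x : E} {r : ℝ} (hr : 0 < r)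
    (h : f =ᵐ[μ.restrict (Metric.ball x r)] 0) : f = 0 := by
  have h1 : Set.EqOn f 0 (Metric.ball x r) := Measure.eqOn_open_of_ae_eq h Metric.isOpen_ball
    (hf.continuousOn.mono (Set.subset_univ _)) continuousOn_const
  exact hf.eq_of_eventuallyEq analyticOnNhd_const
    (Filter.eventuallyEq_of_mem (Metric.ball_mem_nhds x hr) h1)

/-- The estimate on the reference configuration. -/
lemma exists_integral_polyFun_sq_le (n p : ℕ) (R : ℝ) :
    ∃ C : ℝ, 0 < C ∧ ∀ q : MvPolynomial (Fin (n + 1)) ℝ, q.totalDegree ≤ p →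
      ∫ x in Metric.ball 0 R, (polyFun _ q x) ^ 2 ≤
        C * ((∫ x in Metric.ball 0 1,
            (fderiv ℝ (polyFun _ q) x (EuclideanSpace.single 0 1)) ^ 2) +
          ∫ y in Metric.ball 0 1, (polyFun _ q (hyperplaneEmbedding n y)) ^ 2) := by
  let V := MvPolynomial.restrictTotalDegree (Fin (n + 1)) ℝ p
  have hdiff (q) : Differentiable ℝ (polyFun (n + 1) q) := fun x ↦
    (analyticOnNhd_polyFun q Set.univ x trivial).differentiableAt
  let e : V →ₗ[ℝ] EuclideanSpace ℝ (Fin (n + 1)) → ℝ := polyFun (n + 1) ∘ₗ V.subtype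
  let f : V →ₗ[ℝ] EuclideanSpace ℝ (Fin (n + 1)) → ℝ :=
    { toFun := fun q x ↦ fderiv ℝ (polyFun _ q.1) x (EuclideanSpace.single 0 1)
      map_add' := fun q r ↦ by
        ext x
        simp [fderiv_add (hdiff q x) (hdiff r x)]
      map_smul' := fun c q ↦ by
        ext x
        simp [fderiv_const_smul (hdiff q x) c] }
  let g : V →ₗ[ℝ] EuclideanSpace ℝ (Fin n) → ℝ :=
    LinearMap.funLeft ℝ ℝ (hyperplaneEmbedding n) ∘ₗ e
  have hf (q : V) : AnalyticOnNhd ℝ (f q) Set.univ := fun x hx ↦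
    ((ContinuousLinearMap.apply ℝ ℝ (EuclideanSpace.single (0 : Fin (n + 1)) (1 : ℝ))).analyticAt
      _).comp ((analyticOnNhd_polyFun q.1 Set.univ).fderiv x hx)
  have hg (q : V) : AnalyticOnNhd ℝ (g q) Set.univ := fun x _ ↦
    (analyticOnNhd_polyFun q.1 Set.univ _ trivial).comp ((hyperplaneEmbedding n).analyticAt x)
  have hcont {m : ℕ} {F : EuclideanSpace ℝ (Fin m) → ℝ} (hF : AnalyticOnNhd ℝ F Set.univ) :
      Continuous F := continuousOn_univ.1 hF.continuousOn
  have hinj (q : V) (hfq : f q =ᵐ[volume.restrict (Metric.ball 0 1)] 0)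
      (hgq : g q =ᵐ[volume.restrict (Metric.ball 0 1)] 0) : q = 0 := by
    have hf0 := (hf q).eq_zero_of_ae_eq_zero_on_ball one_pos hfq
    have hg0 := (hg q).eq_zero_of_ae_eq_zero_on_ball one_pos hgq
    refine Subtype.ext (polyFun_injective _ ?_)
    rw [ZeroMemClass.coe_zero, map_zero]
    funext x
    let w := hyperplaneEmbedding n (WithLp.toLp 2 (Fin.tail x))
    have hline (t : ℝ) : HasDerivAt
        (fun t : ℝ ↦ polyFun _ q.1 (w + t • EuclideanSpace.single 0 1)) 0 t := by
      have h1 : HasDerivAt (fun t : ℝ ↦ w + t • EuclideanSpace.single (0 : Fin (n + 1)) (1 : ℝ))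
          (EuclideanSpace.single 0 1) t := by
        simpa using ((hasDerivAt_id t).smul_const _).const_add w
      have h2 := (hdiff q.1 _).hasFDerivAt.comp_hasDerivAt t h1
      rwa [show fderiv ℝ (polyFun _ q.1) _ (EuclideanSpace.single 0 1) = 0 from congrFun hf0 _] at h2
    have hconst := is_const_of_deriv_eq_zero (fun t ↦ (hline t).differentiableAt)
      (fun t ↦ (hline t).deriv) (x 0) 0
    simp only [zero_smul, add_zero] at hconst
    rw [hyperplaneEmbedding_tail_add_smul] at hconst
    rw [hconst]
    exact congrFun hg0 _
  obtain ⟨C, hC, h⟩ := exists_integral_sq_le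
    (μ := volume.restrict (Metric.ball 0 R)) (ν := volume.restrict (Metric.ball 0 1))
    (τ := volume.restrict (Metric.ball 0 1)) e f g
    (fun q ↦ (hcont (analyticOnNhd_polyFun q.1 _)).memLp_ball ..)
    (fun q ↦ (hcont (hf q)).memLp_ball ..) (fun q ↦ (hcont (hg q)).memLp_ball ..) hinj
  exact ⟨C, hC, fun q hq ↦ h ⟨q, (MvPolynomial.mem_restrictTotalDegree ..).2 hq⟩⟩

/-- An orthonormal frame adapted to a unit vector and a parametrization of its orthogonal
hyperplane. -/
lemma exists_linearIsometryEquiv_adapted {n : ℕ} {v : EuclideanSpace ℝ (Fin (n + 1))}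
    (hv : ‖v‖ = 1) (φ : EuclideanSpace ℝ (Fin n) →ₗᵢ[ℝ] EuclideanSpace ℝ (Fin (n + 1)))
    (hφ : ∀ y, inner ℝ v (φ y) = 0) :
    ∃ T : EuclideanSpace ℝ (Fin (n + 1)) ≃ₗᵢ[ℝ] EuclideanSpace ℝ (Fin (n + 1)),
      T (EuclideanSpace.single 0 1) = v ∧ ∀ y, T (hyperplaneEmbedding n y) = φ y := by
  let w : Fin (n + 1) → EuclideanSpace ℝ (Fin (n + 1)) :=
    Fin.cons v fun j ↦ φ (EuclideanSpace.single j 1)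
  have hw : Orthonormal ℝ w := by
    rw [orthonormal_iff_ite]
    intro i j
    refine Fin.cases ?_ (fun i ↦ ?_) i <;> refine Fin.cases ?_ (fun j ↦ ?_) j
    · simp [w, hv]
    · simp [w, hφ, (Fin.succ_ne_zero _).symm]
    · simp [w, real_inner_comm, hφ]
    · simp [w, EuclideanSpace.inner_single_left]
  let b : OrthonormalBasis (Fin (n + 1)) ℝ (EuclideanSpace ℝ (Fin (n + 1))) :=
    OrthonormalBasis.mk hw
      (hw.linearIndependent.span_eq_top_of_card_eq_finrank (by simp)).ge
  have hb (i) : b i = w i := by simp [b]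
  refine ⟨b.repr.symm, by simp [hb, w], fun y ↦ ?_⟩
  rw [← b.sum_repr_symm, Fin.sum_univ_succ]
  simp only [hyperplaneEmbedding_zero, hyperplaneEmbedding_succ, hb, w, Fin.cons_succ, zero_smul,
    zero_add]
  conv_rhs => rw [← (EuclideanSpace.basisFun (Fin n) ℝ).sum_repr y]
  simp

lemma exists_polyFun_comp_affine {n : ℕ} (q : MvPolynomial (Fin n) ℝ)
    (a : EuclideanSpace ℝ (Fin n)) (L : EuclideanSpace ℝ (Fin n) →ₗ[ℝ] EuclideanSpace ℝ (Fin n)) :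
    ∃ r : MvPolynomial (Fin n) ℝ, r.totalDegree ≤ q.totalDegree ∧
      ∀ x, polyFun n r x = polyFun n q (a + L x) := by
  obtain ⟨r, hr, h⟩ := q.exists_eval_affine a fun i j ↦ L (EuclideanSpace.single j 1) i
  refine ⟨r, hr, fun x ↦ (h x).trans ?_⟩
  have hx : L x = ∑ j, x j • L (EuclideanSpace.single j 1) := by
    conv_lhs => rw [← (EuclideanSpace.basisFun (Fin n) ℝ).sum_repr x]
    simp
  change MvPolynomial.eval _ q = MvPolynomial.eval _ q
  congr 2
  funext i
  simp [hx, mul_comm]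

/-- The estimate on concentric balls. -/
lemma exists_integral_ball_polyFun_sq_le (n p : ℕ) (R : ℝ) :
    ∃ C : ℝ, 0 < C ∧ ∀ (q : MvPolynomial (Fin (n + 1)) ℝ) (a v : EuclideanSpace ℝ (Fin (n + 1)))
      (ρ : ℝ) (φ : EuclideanSpace ℝ (Fin n) →ₗᵢ[ℝ] EuclideanSpace ℝ (Fin (n + 1))),
      q.totalDegree ≤ p → 0 < ρ → ‖v‖ = 1 → (∀ y, inner ℝ v (φ y) = 0) →
      ∫ x in Metric.ball a (ρ * R), (polyFun _ q x) ^ 2 ≤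
        C * (ρ ^ 2 * (∫ x in Metric.ball a ρ, (fderiv ℝ (polyFun _ q) x v) ^ 2) +
          ρ * ∫ y in Metric.ball 0 ρ, (polyFun _ q (a + φ y)) ^ 2) := by
  obtain ⟨C, hC, h⟩ := exists_integral_polyFun_sq_le n p R
  refine ⟨C, hC, fun q a v ρ φ hq hρ hv hφ ↦ ?_⟩
  obtain ⟨T, hTv, hTφ⟩ := exists_linearIsometryEquiv_adapted hv φ hφ
  obtain ⟨r, hr, hrq⟩ := exists_polyFun_comp_affine q a (ρ • T.toLinearEquiv.toLinearMap)
  replace hrq (x) : polyFun _ r x = polyFun _ q (a + ρ • T x) := hrq x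
  have hderiv (x) : fderiv ℝ (polyFun _ r) x (EuclideanSpace.single 0 1) =
      ρ * fderiv ℝ (polyFun _ q) (a + ρ • T x) v := by
    have h1 : HasFDerivAt (fun x ↦ a + ρ • T x)
        (ρ • (T.toContinuousLinearEquiv : EuclideanSpace ℝ (Fin (n + 1)) →L[ℝ] _)) x :=
      (T.toContinuousLinearEquiv.hasFDerivAt.const_smul ρ).const_add a
    have h2 := (analyticOnNhd_polyFun q Set.univ (a + ρ • T x) trivial).differentiableAt.hasFDerivAt
    rw [funext hrq]
    refine (DFunLike.congr_fun (h2.comp x h1).fderiv _).trans ?_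
    simp [hTv]
  have hmain := h r (hr.trans hq)
  simp only [hrq, hderiv, hTφ, mul_pow, integral_const_mul] at hmain
  have e1 := setIntegral_ball_comp_affine T a hρ R fun x ↦ (polyFun _ q x) ^ 2
  have e2 := setIntegral_ball_comp_affine T a hρ 1 fun x ↦ (fderiv ℝ (polyFun _ q) x v) ^ 2
  have e3 := setIntegral_ball_comp_affine (LinearIsometryEquiv.refl ℝ (EuclideanSpace ℝ (Fin n)))
    0 hρ 1 fun y ↦ (polyFun _ q (a + φ y)) ^ 2
  simp only [finrank_euclideanSpace_fin, mul_one, LinearIsometryEquiv.coe_refl, id, zero_add,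
    map_smul] at e1 e2 e3
  rw [e1, e2, e3]
  refine (mul_le_mul_of_nonneg_left hmain (by positivity)).trans_eq ?_
  ring

lemma le_diam_of_ball_subset {E : Type*} [NormedAddCommGroup E] [NormedSpace ℝ E] {K : Set E}
    (hK : Bornology.IsBounded K) {a v : E} (hv : ‖v‖ = 1) {ρ : ℝ} (hρ : 0 < ρ)
    (h : Metric.ball a ρ ⊆ K) : ρ ≤ Metric.diam K := by
  have h1 : ‖(ρ / 2) • v‖ = ρ / 2 := by
    rw [norm_smul, hv, mul_one, Real.norm_of_nonneg (by positivity)]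
  have h2 : a + (ρ / 2) • v ∈ K := h (by simp [h1, hρ])
  have h3 : a - (ρ / 2) • v ∈ K := h (by simp [h1, hρ])
  have h4 := Metric.dist_le_diam_of_mem hK h2 h3
  rwa [dist_eq_norm, add_sub_sub_cancel, ← add_smul, norm_smul, hv, mul_one, add_halves,
    Real.norm_of_nonneg hρ.le] at h4

/-- On a shape-regular element `K` with inscribed ball `B(x_K, ρ_K)` and a nonzero
direction `b`, the scaled `L²(K)` norm of a polynomial `u` of degree ≤ p is controlled
by the directional derivative along `b/‖b‖` and the trace on the hyperplane section
through `x_K` orthogonal to `b` (parametrized by any linear isometry `φ` of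
`ℝ^{d−1}` onto `(ℝ b)ᗮ`). -/
theorem stmt13 (d p : ℕ) (c₀ : ℝ) (hc₀ : 0 < c₀) :
    ∃ C : ℝ, 0 < C ∧
      ∀ (K : Set (EuclideanSpace ℝ (Fin d))) (xK : EuclideanSpace ℝ (Fin d)) (ρK : ℝ)
        (b : EuclideanSpace ℝ (Fin d)) (q : MvPolynomial (Fin d) ℝ)
        (φ : EuclideanSpace ℝ (Fin (d - 1)) →ₗᵢ[ℝ] EuclideanSpace ℝ (Fin d)),
        MeasurableSet K → Bornology.IsBounded K → 0 < ρK →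
        Metric.ball xK ρK ⊆ K → c₀ * Metric.diam K ≤ ρK → b ≠ 0 →
        Set.range φ = ((ℝ ∙ b)ᗮ : Submodule ℝ (EuclideanSpace ℝ (Fin d))) →
        q.totalDegree ≤ p →
        let u : EuclideanSpace ℝ (Fin d) → ℝ := fun x => MvPolynomial.eval (fun i => x i) q
        let br : EuclideanSpace ℝ (Fin d) := ‖b‖⁻¹ • b
        (Metric.diam K)⁻¹ * ∫ x in K, (u x) ^ 2 ≤
          C * (Metric.diam K * (∫ x in K, (fderiv ℝ u x br) ^ 2) +
            ∫ y in Metric.ball (0 : EuclideanSpace ℝ (Fin (d - 1))) ρK, (u (xK + φ y)) ^ 2) := by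
  rcases d with _ | n
  · exact ⟨1, one_pos, fun K xK ρK b q φ _ _ _ _ _ hb ↦ (hb (Subsingleton.elim _ _)).elim⟩
  obtain ⟨C, hC, h⟩ := exists_integral_ball_polyFun_sq_le n p (c₀⁻¹ + 1)
  refine ⟨C, hC, ?_⟩
  intro K xK ρK b q φ _ hKb hρ hball hc hb hφ hq u br
  have hbr : ‖br‖ = 1 := norm_smul_inv_norm hb
  have horth (y) : inner ℝ br (φ y) = 0 := by
    have h1 : φ y ∈ (ℝ ∙ b)ᗮ := by
      rw [← SetLike.mem_coe, ← hφ]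
      exact ⟨y, rfl⟩
    rw [real_inner_smul_left, Submodule.mem_orthogonal_singleton_iff_inner_right.1 h1, mul_zero]
  have hρh := le_diam_of_ball_subset hKb hbr hρ hball
  have hu : u = polyFun (n + 1) q := rfl
  have hh : 0 < Metric.diam K := hρ.trans_le hρh
  have hK : K ⊆ Metric.ball xK (ρK * (c₀⁻¹ + 1)) := fun x hx ↦ by
    have h1 : dist x xK ≤ Metric.diam K :=
      Metric.dist_le_diam_of_mem hKb hx (hball (Metric.mem_ball_self hρ))
    have h2 : Metric.diam K ≤ ρK * c₀⁻¹ := by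
      rw [← div_eq_mul_inv, le_div_iff₀ hc₀]
      linarith
    rw [Metric.mem_ball]
    linarith
  have hcont : Continuous u :=
    continuousOn_univ.1 (analyticOnNhd_polyFun q Set.univ).continuousOn
  have hcont' : Continuous fun x ↦ fderiv ℝ u x br :=
    (continuousOn_univ.1 (analyticOnNhd_polyFun q Set.univ).fderiv.continuousOn).clm_apply
      continuous_const
  have h1 : ∫ x in K, (u x) ^ 2 ≤ ∫ x in Metric.ball xK (ρK * (c₀⁻¹ + 1)), (u x) ^ 2 :=
    setIntegral_mono_set (hcont.memLp_ball 2 _ _).integrable_sq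
      (Filter.Eventually.of_forall fun x ↦ sq_nonneg _) hK.eventuallyLE
  obtain ⟨s, hs⟩ := hKb.subset_ball xK
  have h2 : ∫ x in Metric.ball xK ρK, (fderiv ℝ u x br) ^ 2 ≤ ∫ x in K, (fderiv ℝ u x br) ^ 2 :=
    setIntegral_mono_set
      (IntegrableOn.mono_set (hcont'.memLp_ball 2 xK s).integrable_sq hs)
      (Filter.Eventually.of_forall fun x ↦ sq_nonneg _) hball.eventuallyLE
  have h3 := h q xK br ρK φ hq hρ hbr horth
  rw [← hu] at h3
  rw [inv_mul_le_iff₀ hh]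
  refine (h1.trans h3).trans ?_
  have hA : 0 ≤ ∫ x in K, (fderiv ℝ u x br) ^ 2 := integral_nonneg fun x ↦ sq_nonneg _
  have hB : 0 ≤ ∫ y in Metric.ball (0 : EuclideanSpace ℝ (Fin n)) ρK, (u (xK + φ y)) ^ 2 :=
    integral_nonneg fun x ↦ sq_nonneg _
  calc _ ≤ C * (Metric.diam K ^ 2 * (∫ x in K, (fderiv ℝ u x br) ^ 2) + Metric.diam K *
        ∫ y in Metric.ball (0 : EuclideanSpace ℝ (Fin n)) ρK, (u (xK + φ y)) ^ 2) := by
        gcongr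
    _ = Metric.diam K * (C * (Metric.diam K * (∫ x in K, (fderiv ℝ u x br) ^ 2) +
        ∫ y in Metric.ball (0 : EuclideanSpace ℝ (Fin n)) ρK, (u (xK + φ y)) ^ 2)) := by
        ring
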